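/- Let f ∈ BV(ℝ) and let (f_j) ⊂ BV(ℝ) with ‖f_j − f‖_{BV} → 0. Let E = {x : M̃f(x) > |f|‾(x)}. Then (M̃f_j)'(x) → (M̃f)'(x) for almost every x ∈ E. -/

import Mathlib

open MeasureTheory Filter Set Topology

/-- Average of |f| over the interval (a,b). -/
noncomputable def mAvg (f : ℝ → ℝ) (a b : ℝ) : ℝ := (∫ t in a..b, |f t|) / (b - a)

/-- Uncentered Hardy–Littlewood maximal function. -/
noncomputable def uMax (f : ℝ → ℝ) (x : ℝ) : ℝ :=
  sSup {y | ∃ a b : ℝ, a < b ∧ a ≤ x ∧ x ≤ b ∧ y = mAvg f a b}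

/-- f has bounded variation on ℝ. -/
def BVfun (f : ℝ → ℝ) : Prop := BoundedVariationOn f Set.univ

/-- Total variation of f over a set, as a real number. -/
noncomputable def varOn (f : ℝ → ℝ) (s : Set ℝ) : ℝ := (eVariationOn f s).toReal

/-- BV norm: |f(-∞)| + Var(f). -/
noncomputable def bvNorm (f : ℝ → ℝ) : ℝ :=
  |limUnder Filter.atBot f| + varOn f Set.univ

/-- Upper precise representative: limsup over intervals I ∋ x with |I| → 0 of averages of |f|. -/
noncomputable def ubar (f : ℝ → ℝ) (x : ℝ) : ℝ :=
  ⨅ h : {h : ℝ // 0 < h},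
    sSup {y | ∃ a b : ℝ, a < b ∧ a ≤ x ∧ x ≤ b ∧ b - a ≤ h.1 ∧ y = mAvg f a b}

/-- The open "interval" (a,b) in ℝ with extended-real endpoints. -/
noncomputable def erealIoo (a b : EReal) : Set ℝ := {x : ℝ | a < (x : EReal) ∧ (x : EReal) < b}

/-- Value of g at an extended-real point, understood as a limit at ±∞. -/
noncomputable def valAt (g : ℝ → ℝ) (a : EReal) : ℝ :=
  if a = ⊥ then limUnder Filter.atBot g
  else if a = ⊤ then limUnder Filter.atTop g
  else g a.toReal

theorem intervalIntegrable_abs_of_bounded {g : ℝ → ℝ} {C : ℝ} (hm : Measurable g)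
    (hC : ∀ t, |g t| ≤ C) (a b : ℝ) : IntervalIntegrable (fun t => |g t|) volume a b := by
  refine (intervalIntegrable_const (c := C)).mono_fun
    (hm.norm.aestronglyMeasurable) (Eventually.of_forall fun t => ?_)
  simpa using (hC t).trans (le_abs_self C)

theorem mAvg_le {g : ℝ → ℝ} {C c a b : ℝ} (hm : Measurable g) (hC : ∀ t, |g t| ≤ C)
    (hab : a < b) (hc : ∀ t ∈ Icc a b, |g t| ≤ c) : mAvg g a b ≤ c := by
  rw [mAvg, div_le_iff₀ (sub_pos.2 hab)]
  have := intervalIntegral.integral_mono_on hab.le (intervalIntegrable_abs_of_bounded hm hC a b)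
    (intervalIntegrable_const (c := c)) hc
  simpa [mul_comm] using this

theorem le_mAvg {g : ℝ → ℝ} {C c a b : ℝ} (hm : Measurable g) (hC : ∀ t, |g t| ≤ C)
    (hab : a < b) (hc : ∀ t ∈ Icc a b, c ≤ |g t|) : c ≤ mAvg g a b := by
  rw [mAvg, le_div_iff₀ (sub_pos.2 hab)]
  have := intervalIntegral.integral_mono_on hab.le (intervalIntegrable_const (c := c))
    (intervalIntegrable_abs_of_bounded hm hC a b) hc
  simpa [mul_comm] using this

theorem mAvg_le_uMax {g : ℝ → ℝ} {C a b x : ℝ} (hm : Measurable g) (hC : ∀ t, |g t| ≤ C)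
    (hab : a < b) (hax : a ≤ x) (hxb : x ≤ b) : mAvg g a b ≤ uMax g x := by
  refine le_csSup ⟨C, ?_⟩ ⟨a, b, hab, hax, hxb, rfl⟩
  rintro _ ⟨a, b, hab, -, -, rfl⟩
  exact mAvg_le hm hC hab fun t _ => hC t

theorem uMax_le {g : ℝ → ℝ} {c x : ℝ}
    (h : ∀ a b, a < b → a ≤ x → x ≤ b → mAvg g a b ≤ c) : uMax g x ≤ c := by
  refine csSup_le ⟨_, x, x + 1, by linarith, le_rfl, by linarith, rfl⟩ ?_
  rintro _ ⟨a, b, hab, hax, hxb, rfl⟩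
  exact h a b hab hax hxb

theorem uMax_le_uMax_add {f g : ℝ → ℝ} {C D ε : ℝ} (hf : Measurable f) (hfC : ∀ t, |f t| ≤ C)
    (hg : Measurable g) (hgD : ∀ t, |g t| ≤ D) (h : ∀ t, |g t| ≤ |f t| + ε) (x : ℝ) :
    uMax g x ≤ uMax f x + ε := by
  refine uMax_le fun a b hab hax hxb => ?_
  have h1 : mAvg g a b ≤ mAvg f a b + ε := by
    have hi := intervalIntegrable_abs_of_bounded hf hfC a b
    have := intervalIntegral.integral_mono_on hab.le (intervalIntegrable_abs_of_bounded hg hgD a b)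
      (hi.add (intervalIntegrable_const (c := ε))) fun t _ => h t
    rw [intervalIntegral.integral_add hi intervalIntegrable_const,
      intervalIntegral.integral_const, smul_eq_mul] at this
    have hpos := sub_pos.2 hab
    rw [mAvg, mAvg, div_add' _ _ _ hpos.ne']
    gcongr
    linarith
  linarith [mAvg_le_uMax hf hfC hab hax hxb]

theorem abs_uMax_sub_le {f g : ℝ → ℝ} {C D ε : ℝ} (hf : Measurable f) (hfC : ∀ t, |f t| ≤ C)
    (hg : Measurable g) (hgD : ∀ t, |g t| ≤ D) (h : ∀ t, |g t - f t| ≤ ε) (x : ℝ) :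
    |uMax g x - uMax f x| ≤ ε := by
  have h1 := uMax_le_uMax_add hf hfC hg hgD (ε := ε) (fun t => by
    linarith [h t, abs_sub_abs_le_abs_sub (g t) (f t)]) x
  have h2 := uMax_le_uMax_add hg hgD hf hfC (ε := ε) (fun t => by
    linarith [h t, abs_sub_abs_le_abs_sub (f t) (g t), abs_sub_comm (f t) (g t)]) x
  rw [abs_le]
  constructor <;> linarith

theorem abs_integral_abs_sub_le {f g : ℝ → ℝ} {C D ε : ℝ} (hf : Measurable f)
    (hfC : ∀ t, |f t| ≤ C) (hg : Measurable g) (hgD : ∀ t, |g t| ≤ D)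
    (h : ∀ t, |g t - f t| ≤ ε) (x y : ℝ) :
    |(∫ t in x..y, |g t|) - (∫ t in x..y, |f t|)| ≤ ε * |y - x| := by
  rw [← intervalIntegral.integral_sub (intervalIntegrable_abs_of_bounded hg hgD x y)
    (intervalIntegrable_abs_of_bounded hf hfC x y)]
  refine intervalIntegral.norm_integral_le_of_norm_le_const
    (f := fun t => |g t| - |f t|) fun t _ => ?_
  exact (abs_abs_sub_abs_le_abs_sub _ _).trans (h t)

/-- Uncentered maximal function restricted to intervals of length at least `h`. -/
noncomputable def longMax (g : ℝ → ℝ) (h x : ℝ) : ℝ :=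
  sSup {y | ∃ a b : ℝ, a < b ∧ a ≤ x ∧ x ≤ b ∧ h ≤ b - a ∧ y = mAvg g a b}

theorem mAvg_le_longMax {g : ℝ → ℝ} {C a b h x : ℝ} (hm : Measurable g) (hC : ∀ t, |g t| ≤ C)
    (hab : a < b) (hax : a ≤ x) (hxb : x ≤ b) (hh : h ≤ b - a) : mAvg g a b ≤ longMax g h x := by
  refine le_csSup ⟨C, ?_⟩ ⟨a, b, hab, hax, hxb, hh, rfl⟩
  rintro _ ⟨a, b, hab, -, -, -, rfl⟩
  exact mAvg_le hm hC hab fun t _ => hC t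

theorem longMax_le {g : ℝ → ℝ} {c h x : ℝ} (hh : 0 < h)
    (hc : ∀ a b, a < b → a ≤ x → x ≤ b → h ≤ b - a → mAvg g a b ≤ c) : longMax g h x ≤ c := by
  refine csSup_le ⟨_, x, x + h, by linarith, le_rfl, by linarith, by linarith, rfl⟩ ?_
  rintro _ ⟨a, b, hab, hax, hxb, hh, rfl⟩
  exact hc a b hab hax hxb hh

theorem longMax_le_uMax {g : ℝ → ℝ} {C h : ℝ} (hm : Measurable g) (hC : ∀ t, |g t| ≤ C)
    (hh : 0 < h) (x : ℝ) : longMax g h x ≤ uMax g x :=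
  longMax_le hh fun _ _ hab hax hxb _ => mAvg_le_uMax hm hC hab hax hxb

theorem longMax_le_add {g : ℝ → ℝ} {C h : ℝ} (hm : Measurable g) (hC : ∀ t, |g t| ≤ C)
    (hh : 0 < h) (x y : ℝ) : longMax g h x ≤ longMax g h y + C / h * |x - y| := by
  refine longMax_le hh fun a b hab hax hxb hL => ?_
  have hC0 : 0 ≤ C := (abs_nonneg _).trans (hC 0)
  have hd : 0 ≤ |x - y| := abs_nonneg _
  have hle := le_abs_self (x - y)
  have hle' := neg_abs_le (x - y)
  have ha' : min a y ≤ a := min_le_left _ _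
  have hb' : b ≤ max b y := le_max_left _ _
  have hlen : max b y - min a y ≤ (b - a) + |x - y| := by
    rcases max_cases b y with h1 | h1 <;> rcases min_cases a y with h2 | h2 <;> linarith
  have h1 : mAvg g (min a y) (max b y) ≤ longMax g h y :=
    mAvg_le_longMax hm hC (by linarith) (min_le_right _ _) (le_max_right _ _) (by linarith)
  have hI0 : 0 ≤ ∫ t in a..b, |g t| :=
    intervalIntegral.integral_nonneg hab.le fun t _ => abs_nonneg _
  have hmono : (∫ t in a..b, |g t|) ≤ ∫ t in (min a y)..(max b y), |g t| :=
    intervalIntegral.integral_mono_interval ha' hab.le hb'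
      (Eventually.of_forall fun t => abs_nonneg _) (intervalIntegrable_abs_of_bounded hm hC _ _)
  have havg : mAvg g a b ≤ C := mAvg_le hm hC hab fun t _ => hC t
  have hpos := sub_pos.2 hab
  have hA0 : 0 ≤ mAvg g a b := div_nonneg hI0 hpos.le
  have hI : (∫ t in a..b, |g t|) = mAvg g a b * (b - a) := by
    rw [mAvg, div_mul_cancel₀ _ hpos.ne']
  have h2 : mAvg g a b - C / h * |x - y| ≤ mAvg g (min a y) (max b y) := by
    have hpos' : 0 < max b y - min a y := by linarith
    conv_rhs => rw [mAvg]
    rw [le_div_iff₀ hpos']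
    have hk : C * |x - y| ≤ C / h * |x - y| * (max b y - min a y) := by
      rw [div_mul_eq_mul_div, div_mul_eq_mul_div, le_div_iff₀ hh]
      exact mul_le_mul_of_nonneg_left (by linarith) (by positivity)
    nlinarith [mul_le_mul_of_nonneg_left hlen hA0, mul_le_mul_of_nonneg_right havg hd]
  linarith

theorem lipschitzWith_longMax {g : ℝ → ℝ} {C h : ℝ} (hm : Measurable g) (hC : ∀ t, |g t| ≤ C)
    (hh : 0 < h) : LipschitzWith (C / h).toNNReal (longMax g h) :=
  LipschitzWith.of_le_add_mul' _ fun x y => by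
    simpa [Real.dist_eq] using longMax_le_add hm hC hh x y

/-- If `|g|` stays below a level `c` near `x` and the maximal function exceeds `c`, then short
intervals do not contribute to it. -/
theorem uMax_eq_longMax {g : ℝ → ℝ} {C c h x : ℝ} (hm : Measurable g) (hC : ∀ t, |g t| ≤ C)
    (hh : 0 < h) (hc : ∀ t, |t - x| < h → |g t| ≤ c) (hcx : c < uMax g x) :
    uMax g x = longMax g h x := by
  refine le_antisymm ?_ (longMax_le_uMax hm hC hh x)
  have : uMax g x ≤ max c (longMax g h x) := uMax_le fun a b hab hax hxb => by
    rcases le_or_gt h (b - a) with hL | hL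
    · exact (mAvg_le_longMax hm hC hab hax hxb hL).trans (le_max_right _ _)
    · refine (mAvg_le hm hC hab fun t ht => hc t ?_).trans (le_max_left _ _)
      rw [abs_lt]
      constructor <;> linarith [ht.1, ht.2]
  rcases le_max_iff.1 this with h1 | h1
  · linarith
  · exact h1

theorem differentiableAt_uMax {g : ℝ → ℝ} {C c x : ℝ} {n : ℕ} (hm : Measurable g)
    (hC : ∀ t, |g t| ≤ C) (hc : ∀ t, |t - x| < 2 * (1 / (n + 1 : ℝ)) → |g t| ≤ c)
    (hcx : c < uMax g x) (hd : DifferentiableAt ℝ (longMax g (1 / (n + 1 : ℝ))) x) :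
    DifferentiableAt ℝ (uMax g) x := by
  set h : ℝ := 1 / (n + 1 : ℝ)
  have hh : 0 < h := by positivity
  refine hd.congr_of_eventuallyEq ?_
  have hx := uMax_eq_longMax hm hC hh (fun t ht => hc t (by linarith)) hcx
  have h1 : ∀ᶠ y in 𝓝 x, c < longMax g h y :=
    (lipschitzWith_longMax hm hC hh).continuous.continuousAt.eventually_const_lt (hx ▸ hcx)
  filter_upwards [h1, Metric.ball_mem_nhds x hh] with y hy hyx
  rw [Metric.mem_ball, Real.dist_eq] at hyx
  refine uMax_eq_longMax hm hC hh (fun t ht => hc t ?_)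
    (hy.trans_le (longMax_le_uMax hm hC hh y))
  linarith [abs_sub_le t y x]

theorem lt_mAvg_left_or_right {g : ℝ → ℝ} {C a b x m : ℝ} (hm : Measurable g)
    (hC : ∀ t, |g t| ≤ C) (hab : a < b) (hax : a ≤ x) (hxb : x ≤ b) (h : m < mAvg g a b) :
    (a < x ∧ m < mAvg g a x) ∨ (x < b ∧ m < mAvg g x b) := by
  rcases hax.eq_or_lt with rfl | hax
  · exact Or.inr ⟨hab, h⟩
  rcases hxb.eq_or_lt with rfl | hxb
  · exact Or.inl ⟨hab, h⟩
  by_contra! hcon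
  have h1 := hcon.1 hax
  have h2 := hcon.2 hxb
  have hadd := intervalIntegral.integral_add_adjacent_intervals
    (intervalIntegrable_abs_of_bounded hm hC a x) (intervalIntegrable_abs_of_bounded hm hC x b)
  rw [mAvg, div_le_iff₀ (sub_pos.2 hax)] at h1
  rw [mAvg, div_le_iff₀ (sub_pos.2 hxb)] at h2
  rw [mAvg, lt_div_iff₀ (sub_pos.2 hab)] at h
  linarith

/-- The supporting inequality satisfied by the maximal function at `x` when `u` is the signed
reciprocal length (`0` for infinite length) of an optimal interval with endpoint `x`. -/
def IsSupportSlope (g : ℝ → ℝ) (x h u : ℝ) : Prop :=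
  ∀ y, |y - x| < h → uMax g x - u * (∫ t in x..y, |g t|) ≤ uMax g y * (1 - u * (y - x))

theorem exists_approx_supportSlope {g : ℝ → ℝ} {C c h x ε : ℝ} (hm : Measurable g)
    (hC : ∀ t, |g t| ≤ C) (hh : 0 < h) (hc : ∀ t, |t - x| < h → |g t| ≤ c)
    (hcx : c < uMax g x) (hε : 0 < ε) :
    ∃ u ∈ Icc (-(1 / h)) (1 / h), ∀ y, |y - x| < h →
      uMax g x - ε - u * (∫ t in x..y, |g t|) ≤ uMax g y * (1 - u * (y - x)) := by
  set m := max c (uMax g x - ε)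
  have hcm : c ≤ m := le_max_left _ _
  have hεm : uMax g x - ε ≤ m := le_max_right _ _
  have hmx : m < uMax g x := max_lt hcx (by linarith)
  obtain ⟨a, b, hab, hax, hxb, hlt⟩ : ∃ a b, a < b ∧ a ≤ x ∧ x ≤ b ∧ m < mAvg g a b := by
    by_contra! hcon
    exact hmx.not_ge (uMax_le hcon)
  have hadd := fun a b c : ℝ => intervalIntegral.integral_add_adjacent_intervals
    (intervalIntegrable_abs_of_bounded hm hC a b) (intervalIntegrable_abs_of_bounded hm hC b c)
  rcases lt_mAvg_left_or_right hm hC hab hax hxb hlt with ⟨hax, hA⟩ | ⟨hxb, hA⟩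
  · have hL : h ≤ x - a := by
      by_contra! hlt
      refine hA.not_ge ((mAvg_le hm hC hax fun t ht => hc t ?_).trans hcm)
      rw [abs_lt]
      constructor <;> linarith [ht.1, ht.2]
    have hpos := sub_pos.2 hax
    have hu : 1 / (x - a) ≤ 1 / h := one_div_le_one_div_of_le hh hL
    have hu0 : 0 < 1 / (x - a) := by positivity
    refine ⟨-(1 / (x - a)), ⟨by linarith, by linarith⟩, fun y hy => ?_⟩
    rw [abs_lt] at hy
    have hay : a < y := by linarith
    have hM := mAvg_le_uMax hm hC hay hay.le le_rfl
    rw [mAvg, div_le_iff₀ (by linarith)] at hM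
    rw [mAvg, lt_div_iff₀ hpos] at hA
    have e1 : 1 - -(1 / (x - a)) * (y - x) = (y - a) / (x - a) := by field_simp; ring
    rw [e1, ← mul_div_assoc, le_div_iff₀ hpos]
    have e2 : (uMax g x - ε - -(1 / (x - a)) * ∫ t in x..y, |g t|) * (x - a)
      = (uMax g x - ε) * (x - a) + ∫ t in x..y, |g t| := by
      field_simp
      ring
    rw [e2]
    nlinarith [hadd a x y, mul_le_mul_of_nonneg_right hεm hpos.le]
  · have hL : h ≤ b - x := by
      by_contra! hlt
      refine hA.not_ge ((mAvg_le hm hC hxb fun t ht => hc t ?_).trans hcm)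
      rw [abs_lt]
      constructor <;> linarith [ht.1, ht.2]
    have hpos := sub_pos.2 hxb
    have hu : 1 / (b - x) ≤ 1 / h := one_div_le_one_div_of_le hh hL
    have hu0 : 0 < 1 / (b - x) := by positivity
    refine ⟨1 / (b - x), ⟨by linarith, hu⟩, fun y hy => ?_⟩
    rw [abs_lt] at hy
    have hay : y < b := by linarith
    have hM := mAvg_le_uMax hm hC hay le_rfl hay.le
    rw [mAvg, div_le_iff₀ (by linarith)] at hM
    rw [mAvg, lt_div_iff₀ hpos] at hA
    have e1 : 1 - 1 / (b - x) * (y - x) = (b - y) / (b - x) := by field_simp; ring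
    rw [e1, ← mul_div_assoc, le_div_iff₀ hpos]
    have e2 : (uMax g x - ε - 1 / (b - x) * ∫ t in x..y, |g t|) * (b - x)
      = (uMax g x - ε) * (b - x) - ∫ t in x..y, |g t| := by field_simp
    rw [e2]
    nlinarith [hadd x y b, mul_le_mul_of_nonneg_right hεm hpos.le]

theorem exists_isSupportSlope {g : ℝ → ℝ} {C c h x : ℝ} (hm : Measurable g)
    (hC : ∀ t, |g t| ≤ C) (hh : 0 < h) (hc : ∀ t, |t - x| < h → |g t| ≤ c)
    (hcx : c < uMax g x) : ∃ u ∈ Icc (-(1 / h)) (1 / h), IsSupportSlope g x h u := by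
  choose u huK hu using fun n : ℕ =>
    exists_approx_supportSlope hm hC hh hc hcx (Nat.one_div_pos_of_nat (α := ℝ) (n := n))
  obtain ⟨v, hvK, φ, hφ, hv⟩ := isCompact_Icc.tendsto_subseq huK
  refine ⟨v, hvK, fun y hy => ?_⟩
  have hε : Tendsto (fun n => 1 / ((φ n : ℝ) + 1)) atTop (𝓝 0) :=
    tendsto_one_div_add_atTop_nhds_zero_nat.comp hφ.tendsto_atTop
  have hl := (tendsto_const_nhds (x := uMax g x)).sub hε |>.sub
    (hv.mul_const (∫ t in x..y, |g t|))
  have hr := ((tendsto_const_nhds (x := (1 : ℝ))).sub (hv.mul_const (y - x))).const_mul (uMax g y)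
  rw [sub_zero] at hl
  exact le_of_tendsto_of_tendsto' hl hr fun n => hu (φ n) y hy

theorem IsSupportSlope.deriv_eq {g : ℝ → ℝ} {C h x u : ℝ} (hu : IsSupportSlope g x h u)
    (hm : Measurable g) (hC : ∀ t, |g t| ≤ C) (hh : 0 < h) (hg : ContinuousAt g x)
    (hd : DifferentiableAt ℝ (uMax g) x) : deriv (uMax g) x = u * (uMax g x - |g x|) := by
  have hF : HasDerivAt (fun y => ∫ t in x..y, |g t|) |g x| x :=
    intervalIntegral.integral_hasDerivAt_right (intervalIntegrable_abs_of_bounded hm hC x x)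
      (hm.norm.stronglyMeasurable.stronglyMeasurableAtFilter) hg.abs
  have hlin : HasDerivAt (fun y => 1 - u * (y - x)) (-(u * 1)) x :=
    (((hasDerivAt_id x).sub_const x).const_mul u).const_sub 1
  have hG := (hd.hasDerivAt.mul hlin).add (hF.const_mul u)
  have hmin : IsLocalMin (uMax g * (fun y => 1 - u * (y - x)) +
      fun y => u * ∫ t in x..y, |g t|) x := by
    filter_upwards [Metric.ball_mem_nhds x hh] with y hy
    rw [Metric.mem_ball, Real.dist_eq] at hy
    simpa using hu y hy
  have h0 := hmin.hasDerivAt_eq_zero hG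
  simp only [sub_self, mul_zero, sub_zero, mul_one] at h0
  linarith

theorem IsSupportSlope.of_tendsto {g : ℝ → ℝ} {G : ℕ → ℝ → ℝ} {C x h u : ℝ} {D ε v : ℕ → ℝ}
    (hm : Measurable g) (hC : ∀ t, |g t| ≤ C) (hGm : ∀ n, Measurable (G n))
    (hGD : ∀ n t, |G n t| ≤ D n) (hG : ∀ n t, |G n t - g t| ≤ ε n)
    (hε : Tendsto ε atTop (𝓝 0)) (hv : Tendsto v atTop (𝓝 u))
    (hs : ∀ᶠ n in atTop, IsSupportSlope (G n) x h (v n)) : IsSupportSlope g x h u := by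
  intro y hy
  have hM (z : ℝ) : Tendsto (fun n => uMax (G n) z) atTop (𝓝 (uMax g z)) :=
    tendsto_iff_dist_tendsto_zero.2 <| squeeze_zero (fun _ => dist_nonneg)
      (fun n => abs_uMax_sub_le hm hC (hGm n) (hGD n) (hG n) z) hε
  have hI : Tendsto (fun n => ∫ t in x..y, |G n t|) atTop (𝓝 (∫ t in x..y, |g t|)) :=
    tendsto_iff_dist_tendsto_zero.2 <| squeeze_zero (fun _ => dist_nonneg)
      (fun n => abs_integral_abs_sub_le hm hC (hGm n) (hGD n) (hG n) x y)
      (by simpa using hε.mul_const |y - x|)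
  refine le_of_tendsto_of_tendsto ((hM x).sub (hv.mul hI))
    ((hM y).mul (tendsto_const_nhds.sub (hv.mul_const (y - x)))) ?_
  filter_upwards [hs] with n hn using hn y hy

theorem abs_le_ubar {g : ℝ → ℝ} {C x : ℝ} (hm : Measurable g) (hC : ∀ t, |g t| ≤ C)
    (hg : ContinuousAt g x) : |g x| ≤ ubar g x := by
  have : Nonempty {h : ℝ // 0 < h} := ⟨⟨1, one_pos⟩⟩
  refine le_ciInf fun ⟨h, hh⟩ => le_of_forall_lt fun c hc => ?_
  obtain ⟨c', hcc', hc'⟩ := exists_between hc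
  obtain ⟨δ, hδ, hball⟩ := Metric.eventually_nhds_iff.1 (hg.abs.eventually_const_lt hc')
  have hpos : 0 < min h (δ / 2) := lt_min hh (by linarith)
  refine hcc'.trans_le ((le_mAvg hm hC (a := x) (b := x + min h (δ / 2)) (by linarith)
    fun t ht => (hball ?_).le).trans (le_csSup ⟨C, ?_⟩
      ⟨x, x + min h (δ / 2), by linarith, le_rfl, by linarith, ?_, rfl⟩))
  · rw [Real.dist_eq, abs_lt]
    constructor <;> linarith [ht.1, ht.2, min_le_right h (δ / 2)]
  · rintro _ ⟨a, b, hab, -, -, -, rfl⟩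
    exact mAvg_le hm hC hab fun t _ => hC t
  · simp

theorem BVfun.measurable {g : ℝ → ℝ} (hg : BVfun g) : Measurable g := by
  obtain ⟨p, q, hp, hq, rfl⟩ :=
    (BoundedVariationOn.locallyBoundedVariationOn hg).exists_monotoneOn_sub_monotoneOn
  exact (monotoneOn_univ.1 hp).measurable.sub (monotoneOn_univ.1 hq).measurable

theorem BVfun.abs_le_bvNorm {g : ℝ → ℝ} (hg : BVfun g) (x : ℝ) : |g x| ≤ bvNorm g := by
  have hlim : Tendsto (fun y => |y|) (map g atBot) (𝓝 |limUnder atBot g|) :=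
    (BoundedVariationOn.tendsto_atBot_limUnder hg).abs
  refine ge_of_tendsto (tendsto_map'_iff.1 hlim |>.add_const _) (Eventually.of_forall fun y => ?_)
  have h1 : dist (g x) (g y) ≤ varOn g univ :=
    BoundedVariationOn.dist_le hg (mem_univ x) (mem_univ y)
  rw [Real.dist_eq] at h1
  simp only [Function.comp]
  linarith [abs_sub_abs_le_abs_sub (g x) (g y)]

theorem BVfun.sub {f g : ℝ → ℝ} (hf : BVfun f) (hg : BVfun g) : BVfun (f - g) := by
  refine ne_top_of_le_ne_top (ENNReal.add_ne_top.2 ⟨hf, hg⟩) (iSup_le ?_)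
  rintro ⟨n, u, hu, hmem⟩
  calc ∑ i ∈ Finset.range n, edist ((f - g) (u (i + 1))) ((f - g) (u i))
      ≤ ∑ i ∈ Finset.range n,
          (edist (f (u (i + 1))) (f (u i)) + edist (g (u (i + 1))) (g (u i))) :=
        Finset.sum_le_sum fun i _ => by
          simp only [edist_eq_enorm_sub, Pi.sub_apply]
          rw [sub_sub_sub_comm]
          exact enorm_sub_le
    _ ≤ eVariationOn f univ + eVariationOn g univ := by
        rw [Finset.sum_add_distrib]
        exact add_le_add
          (eVariationOn.sum_le_of_monotoneOn_Iic (hu.monotoneOn _) fun i _ => hmem i)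
          (eVariationOn.sum_le_of_monotoneOn_Iic (hu.monotoneOn _) fun i _ => hmem i)

theorem BVfun.ae_continuousAt {g : ℝ → ℝ} (hg : BVfun g) : ∀ᵐ x, ContinuousAt g x :=
  (BoundedVariationOn.locallyBoundedVariationOn hg).ae_differentiableAt.mono
    fun _ h => h.continuousAt

theorem BVfun.ae_differentiableAt_longMax {g : ℝ → ℝ} (hg : BVfun g) :
    ∀ᵐ x, ∀ n : ℕ, DifferentiableAt ℝ (longMax g (1 / (n + 1 : ℝ))) x :=
  ae_all_iff.2 fun _ => (lipschitzWith_longMax hg.measurable hg.abs_le_bvNorm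
    Nat.one_div_pos_of_nat).ae_differentiableAt_real

theorem stmt16 (f : ℝ → ℝ) (hf : BVfun f) (fj : ℕ → ℝ → ℝ) (hfj : ∀ j, BVfun (fj j))
    (hconv : Tendsto (fun j => bvNorm (fj j - f)) atTop (𝓝 0)) :
    ∀ᵐ x : ℝ, ubar f x < uMax f x →
      Tendsto (fun j => deriv (uMax (fj j)) x) atTop (𝓝 (deriv (uMax f) x)) := by
  have hm := hf.measurable
  have hC := hf.abs_le_bvNorm
  have hmj := fun j => (hfj j).measurable
  have hCj := fun j => (hfj j).abs_le_bvNorm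
  have hclose (j : ℕ) (t : ℝ) : |fj j t - f t| ≤ bvNorm (fj j - f) :=
    ((hfj j).sub hf).abs_le_bvNorm t
  filter_upwards [hf.ae_continuousAt, ae_all_iff.2 fun j => (hfj j).ae_continuousAt,
    hf.ae_differentiableAt_longMax, ae_all_iff.2 fun j => (hfj j).ae_differentiableAt_longMax]
    with x hx hxj hd hdj hE
  obtain ⟨c, hfc, hcM⟩ := exists_between ((abs_le_ubar hm hC hx).trans_lt hE)
  obtain ⟨δ, hδ, hball⟩ := Metric.eventually_nhds_iff.1 (hx.abs.eventually_lt_const hfc)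
  obtain ⟨n, hn⟩ := exists_nat_one_div_lt (half_pos hδ)
  have hbound (t : ℝ) (ht : |t - x| < 2 * (1 / (n + 1 : ℝ))) : |f t| ≤ c :=
    (hball (by rw [Real.dist_eq]; linarith)).le
  set h : ℝ := 1 / (n + 1 : ℝ)
  have hh : 0 < h := Nat.one_div_pos_of_nat
  have hMj := fun j => abs_uMax_sub_le hm hC (hmj j) (hCj j) (hclose j) x
  have hgood : ∀ᶠ j in atTop, DifferentiableAt ℝ (uMax (fj j)) x ∧
      ∃ u ∈ Icc (-(1 / h)) (1 / h), IsSupportSlope (fj j) x h u := by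
    filter_upwards [hconv.eventually_lt_const (show 0 < (uMax f x - c) / 3 by linarith)] with j hj
    have hcj (t : ℝ) (ht : |t - x| < 2 * h) : |fj j t| ≤ c + (uMax f x - c) / 3 := by
      linarith [hbound t ht, hclose j t, abs_sub_abs_le_abs_sub (fj j t) (f t)]
    have hcMj : c + (uMax f x - c) / 3 < uMax (fj j) x := by
      linarith [(abs_le.1 (hMj j)).1]
    exact ⟨differentiableAt_uMax (hmj j) (hCj j) hcj hcMj (hdj j n),
      exists_isSupportSlope (hmj j) (hCj j) hh (fun t ht => hcj t (by linarith)) hcMj⟩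
  have hdf : DifferentiableAt ℝ (uMax f) x := differentiableAt_uMax hm hC hbound hcM (hd n)
  have hlimM : Tendsto (fun j => uMax (fj j) x) atTop (𝓝 (uMax f x)) :=
    tendsto_iff_dist_tendsto_zero.2 (squeeze_zero (fun _ => dist_nonneg) hMj hconv)
  have hlimf : Tendsto (fun j => fj j x) atTop (𝓝 (f x)) :=
    tendsto_iff_dist_tendsto_zero.2 (squeeze_zero (fun _ => dist_nonneg) (hclose · x) hconv)
  have hsel : ∃ u : ℕ → ℝ, ∀ᶠ j in atTop, DifferentiableAt ℝ (uMax (fj j)) x ∧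
      u j ∈ Icc (-(1 / h)) (1 / h) ∧ IsSupportSlope (fj j) x h (u j) := by
    classical
    refine ⟨fun j => if H : ∃ u ∈ Icc (-(1 / h)) (1 / h), IsSupportSlope (fj j) x h u
      then H.choose else 0, ?_⟩
    filter_upwards [hgood] with j hj
    rw [dif_pos hj.2]
    exact ⟨hj.1, hj.2.choose_spec⟩
  obtain ⟨u, hu⟩ := hsel
  refine tendsto_of_subseq_tendsto fun ns hns => ?_
  obtain ⟨v, -, φ, hφ, hv⟩ := (isCompact_Icc (a := -(1 / h)) (b := 1 / h)).tendsto_subseq'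
    (x := u ∘ ns) ((hns.eventually hu).mono fun _ hj => hj.2.1).frequently
  have hsub : Tendsto (fun k => ns (φ k)) atTop atTop := hns.comp hφ.tendsto_atTop
  have hslope : IsSupportSlope f x h v :=
    IsSupportSlope.of_tendsto hm hC (fun k => hmj (ns (φ k))) (fun k => hCj (ns (φ k)))
      (fun k => hclose (ns (φ k))) (hconv.comp hsub) hv
      ((hsub.eventually hu).mono fun _ hj => hj.2.2)
  refine ⟨φ, ?_⟩
  rw [hslope.deriv_eq hm hC hh hx hdf]
  refine (hv.mul ((hlimM.comp hsub).sub (hlimf.comp hsub).abs)).congr' ?_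
  filter_upwards [hsub.eventually hu] with k hk
  exact (hk.2.2.deriv_eq (hmj _) (hCj _) hh (hxj _) hk.1).symm
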